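/- Let n ≥ 1, let g : ℝ → Matrix (Fin n) (Fin n) ℝ be twice differentiable with g(t) invertible for all t, and let ξ₀ ∈ Matrix (Fin n) (Fin n) ℝ be a fixed matrix. Then for every t: trace( (d/dt (g⁻¹ * g'))(t) * (g(t)⁻¹ * ξ₀ * g(t)) ) = (d/dt (fun s => trace (g'(s) * g(s)⁻¹ * ξ₀)))(t). Consequently, trace((d/dt(g⁻¹ * g'))(t) * g(t)⁻¹ * ξ₀ * g(t)) = 0 for all t if and only if the function t ↦ trace(g'(t) * g(t)⁻¹ * ξ₀) is constant. -/

import Mathlib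

open Matrix

attribute [local instance] Matrix.linftyOpNormedAddCommGroup Matrix.linftyOpNormedRing
  Matrix.linftyOpNormedAlgebra

/-!
Conjugating the body velocity `ω = g⁻¹ g'` by `g` gives the spatial velocity `g' g⁻¹`. The
derivative of the conjugation contributes the commutator `[ω, ω] = 0`, so
`(g' g⁻¹)' = g ω' g⁻¹`. Pairing with `ξ₀` under a functional `τ` satisfying `τ (a b) = τ (b a)`
moves this conjugation onto `ξ₀`.
-/

open scoped Ring

section Velocity

variable {𝕜 A : Type*} [NontriviallyNormedField 𝕜] [NormedRing A] [NormedAlgebra 𝕜 A]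

/-- The velocity `g⁻¹ g'` of a curve of units, translated to the identity from the left.
`Ring.inverse` and `deriv` are total, so the curve may be any function into the algebra. -/
noncomputable def bodyVelocity (g : 𝕜 → A) (t : 𝕜) : A := (g t)⁻¹ʳ * deriv g t

/-- The velocity `g' g⁻¹` of a curve of units, translated to the identity from the right;
encoded as for `bodyVelocity`. -/
noncomputable def spatialVelocity (g : 𝕜 → A) (t : 𝕜) : A := deriv g t * (g t)⁻¹ʳ

variable [HasSummableGeomSeries A] {g : 𝕜 → A} {t : 𝕜}

theorem hasDerivAt_ringInverse_comp {g' : A} (hg : HasDerivAt g g' t) (hu : IsUnit (g t)) :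
    HasDerivAt (fun s => (g s)⁻¹ʳ) (-((g t)⁻¹ʳ * g' * (g t)⁻¹ʳ)) t := by
  obtain ⟨u, hu⟩ := hu
  have hinv := hasFDerivAt_ringInverse (𝕜 := 𝕜) u
  rw [← Ring.inverse_unit, hu] at hinv
  exact hinv.comp_hasDerivAt t hg

theorem hasDerivAt_bodyVelocity (hg : DifferentiableAt 𝕜 g t)
    (hg' : DifferentiableAt 𝕜 (deriv g) t) (hu : IsUnit (g t)) :
    HasDerivAt (bodyVelocity g)
      ((g t)⁻¹ʳ * deriv (deriv g) t - bodyVelocity g t * bodyVelocity g t) t := by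
  refine ((hasDerivAt_ringInverse_comp hg.hasDerivAt hu).mul hg'.hasDerivAt).congr_deriv ?_
  simp only [bodyVelocity]
  noncomm_ring

theorem hasDerivAt_spatialVelocity (hg : DifferentiableAt 𝕜 g t)
    (hg' : DifferentiableAt 𝕜 (deriv g) t) (hu : IsUnit (g t)) :
    HasDerivAt (spatialVelocity g)
      (deriv (deriv g) t * (g t)⁻¹ʳ - spatialVelocity g t * spatialVelocity g t) t := by
  refine (hg'.hasDerivAt.mul (hasDerivAt_ringInverse_comp hg.hasDerivAt hu)).congr_deriv ?_
  simp only [spatialVelocity]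
  noncomm_ring

theorem deriv_spatialVelocity_eq_conj (hg : DifferentiableAt 𝕜 g t)
    (hg' : DifferentiableAt 𝕜 (deriv g) t) (hu : IsUnit (g t)) :
    deriv (spatialVelocity g) t = g t * deriv (bodyVelocity g) t * (g t)⁻¹ʳ := by
  rw [(hasDerivAt_spatialVelocity hg hg' hu).deriv, (hasDerivAt_bodyVelocity hg hg' hu).deriv]
  simp only [bodyVelocity, spatialVelocity, mul_sub, sub_mul, mul_assoc,
    Ring.mul_inverse_cancel_left _ _ hu]

variable {E : Type*} [NormedAddCommGroup E] [NormedSpace 𝕜 E]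

theorem hasDerivAt_tracial_spatialVelocity_mul (τ : A →L[𝕜] E)
    (hτ : ∀ a b, τ (a * b) = τ (b * a)) (hg : DifferentiableAt 𝕜 g t)
    (hg' : DifferentiableAt 𝕜 (deriv g) t) (hu : IsUnit (g t)) (ξ : A) :
    HasDerivAt (fun s => τ (spatialVelocity g s * ξ))
      (τ (deriv (bodyVelocity g) t * ((g t)⁻¹ʳ * ξ * g t))) t := by
  have hspatial : HasDerivAt (spatialVelocity g) (deriv (spatialVelocity g) t) t :=
    (hasDerivAt_spatialVelocity hg hg' hu).differentiableAt.hasDerivAt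
  have hconj : τ (deriv (bodyVelocity g) t * ((g t)⁻¹ʳ * ξ * g t)) =
      τ (deriv (spatialVelocity g) t * ξ) := by
    rw [deriv_spatialVelocity_eq_conj hg hg' hu, ← mul_assoc, hτ]
    simp only [mul_assoc]
  rw [hconj]
  exact τ.hasFDerivAt.comp_hasDerivAt t (hspatial.mul_const ξ)

end Velocity

theorem forall_deriv_eq_zero_iff_forall_eq {𝕜 E : Type*} [RCLike 𝕜] [NormedAddCommGroup E]
    [NormedSpace 𝕜 E] {f : 𝕜 → E} (hf : Differentiable 𝕜 f) :
    (∀ t, deriv f t = 0) ↔ ∀ s t, f s = f t := by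
  refine ⟨is_const_of_deriv_eq_zero hf, fun hconst t => ?_⟩
  rw [funext fun s => hconst s t, deriv_const]

theorem trace_momentum_identity_general {𝕜 A E : Type*} [RCLike 𝕜] [NormedRing A]
    [NormedAlgebra 𝕜 A] [HasSummableGeomSeries A] [NormedAddCommGroup E] [NormedSpace 𝕜 E]
    (τ : A →L[𝕜] E) (hτ : ∀ a b, τ (a * b) = τ (b * a)) {g : 𝕜 → A}
    (hg : Differentiable 𝕜 g) (hg' : Differentiable 𝕜 (deriv g))
    (hinv : ∀ t, IsUnit (g t)) (ξ₀ : A) :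
    (∀ t, τ (deriv (bodyVelocity g) t * ((g t)⁻¹ʳ * ξ₀ * g t)) =
        deriv (fun s => τ (spatialVelocity g s * ξ₀)) t) ∧
    ((∀ t, τ (deriv (bodyVelocity g) t * ((g t)⁻¹ʳ * ξ₀ * g t)) = 0) ↔
      ∀ s t, τ (spatialVelocity g s * ξ₀) = τ (spatialVelocity g t * ξ₀)) := by
  have hmomentum t := hasDerivAt_tracial_spatialVelocity_mul τ hτ (hg t) (hg' t) (hinv t) ξ₀
  refine ⟨fun t => (hmomentum t).deriv.symm, ?_⟩
  simp only [← (hmomentum _).deriv]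
  exact forall_deriv_eq_zero_iff_forall_eq fun t => (hmomentum t).differentiableAt

/-- For a twice differentiable curve `g(t)` of invertible matrices and a fixed matrix `ξ₀`,
`trace((d/dt (g⁻¹ g')) · g⁻¹ ξ₀ g) = d/dt trace(g' g⁻¹ ξ₀)`; consequently the nonholonomic
momentum equation `trace((d/dt(g⁻¹g')) g⁻¹ ξ₀ g) = 0` holds for all `t` iff the spatial
quantity `trace(g' g⁻¹ ξ₀)` is constant. -/
theorem trace_momentum_identity {n : ℕ} (hn : 1 ≤ n)
    (g : ℝ → Matrix (Fin n) (Fin n) ℝ)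
    (hg : Differentiable ℝ g) (hg' : Differentiable ℝ (deriv g))
    (hinv : ∀ t, IsUnit (g t)) (ξ₀ : Matrix (Fin n) (Fin n) ℝ) :
    (∀ t, Matrix.trace (deriv (fun s => (g s)⁻¹ * deriv g s) t * ((g t)⁻¹ * ξ₀ * g t))
        = deriv (fun s => Matrix.trace (deriv g s * (g s)⁻¹ * ξ₀)) t) ∧
    ((∀ t, Matrix.trace (deriv (fun s => (g s)⁻¹ * deriv g s) t
          * ((g t)⁻¹ * ξ₀ * g t)) = 0) ↔
      ∀ s t, Matrix.trace (deriv g s * (g s)⁻¹ * ξ₀)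
          = Matrix.trace (deriv g t * (g t)⁻¹ * ξ₀)) := by
  have : CompleteSpace (Matrix (Fin n) (Fin n) ℝ) := FiniteDimensional.complete ℝ _
  simp only [Matrix.nonsing_inv_eq_ringInverse]
  exact trace_momentum_identity_general (Matrix.traceLinearMap (Fin n) ℝ ℝ).toContinuousLinearMap
    Matrix.trace_mul_comm hg hg' hinv ξ₀
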